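/- arXiv:2304.09965 — 2 statements merged into one kernel-verified Lean document; each statement's English description precedes it below -/
import Mathlib

section
/- For every integer m ≥ 0, every integer n with 0 < n < L, and every real I with 0 ≤ I < 1, the one-step increment in the horizon satisfies P_{L+1}(m,n) = P_L(m,n) + a_{L−n,m} (1−I)^{L−n} I^{m+1+L−n}. -/
/-!
Encode a step sequence by `d : Fin T → Bool` and let `ups d k` be the number of up-steps among the
first `k` steps, so that the walk is at `(m + 2 * ups d k - k, n + ups d k)` at time `k`.

A walk from `m ≥ 0` that first reaches `-1` at time `T` does so by a down-step. Hence the value of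
`n + ups` at time `T` is already attained at time `T - 1`, and since `ups` starts at `0` and grows
in unit steps, the walk avoids the height `n + i` before time `T` exactly when its total number of
up-steps is less than `i` (`cond_iff`). Passing from the horizon `n + i` to `n + i + 1` therefore
adds precisely the first-passage sequences with exactly `i` up-steps. All of these have length
`T = m + 2 * i + 1` and weight `(1 - I) ^ i * I ^ (m + 1 + i)`, and there are `a i m` of them.
The series defining `P` have only finitely many non-zero terms, so the termwise identity can be
summed.
-/

-- `P I L m n` : the probability that the 2D random walk started at `(m, n)`, with i.i.d.
-- steps `(-1, 0)` (probability `I`) and `(1, 1)` (probability `1 - I`), hits the line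
-- `L₁ = {(m', n') : m' = -1}` strictly before hitting the line `L₂ = {(m', n') : n' = L}`,
-- written as `∑_{T=0}^∞ Pr(s_T ∈ L₁ ∧ ∀ T' < T, s_{T'} ∉ L₁ ∪ L₂)`.
-- A step sequence of length `T` is encoded as `d : Fin T → Bool`, where `d t = true` means
-- the step `(1, 1)` (probability `1 - I`) and `d t = false` means `(-1, 0)` (probability `I`).
open Classical in
noncomputable def P (I : ℝ) (L m n : ℤ) : ℝ :=
  ∑' T : ℕ, ∑ d : Fin T → Bool,
    if (m + ∑ t : Fin T, (if d t then (1 : ℤ) else -1)) = -1 ∧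
        (∀ k : ℕ, k < T →
          (m + ∑ t ∈ Finset.univ.filter (fun t : Fin T => (t : ℕ) < k),
              (if d t then (1 : ℤ) else -1)) ≠ -1 ∧
          (n + ∑ t ∈ Finset.univ.filter (fun t : Fin T => (t : ℕ) < k),
              (if d t then (1 : ℤ) else 0)) ≠ L) then
      ∏ t : Fin T, (if d t then (1 - I) else I)
    else 0

-- `a i m` : the number of sequences `(d_1, …, d_{m+2i+1})` with entries in `{-1, +1}`
-- (encoded by `Bool`, `true ↦ +1`, `false ↦ -1`), having exactly `i` entries equal to `+1`
-- (hence `m + i + 1` entries equal to `-1`), such that the partial sums satisfy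
-- `m + d_1 + ⋯ + d_k ≥ 0` for all `k = 1, …, m + 2i`; i.e. the walk on `ℤ` started at `m`
-- first reaches `-1` exactly at step `m + 2i + 1`.
noncomputable def a (i m : ℕ) : ℕ :=
  Nat.card {d : Fin (m + 2 * i + 1) → Bool //
    (Finset.univ.filter (fun t => d t = true)).card = i ∧
    ∀ k : ℕ, k ≤ m + 2 * i →
      0 ≤ (m : ℤ) + ∑ t ∈ Finset.univ.filter (fun t : Fin (m + 2 * i + 1) => (t : ℕ) < k),
            (if d t then (1 : ℤ) else -1) }

/-- The number of up-steps among the first `k` steps of `d`, as an integer. -/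
def ups {T : ℕ} (d : Fin T → Bool) (k : ℕ) : ℤ :=
  ∑ t ∈ Finset.univ.filter (fun t : Fin T => (t : ℕ) < k), (if d t then (1 : ℤ) else 0)

/-- The first coordinate of the walk, started at `m`, first reaches `-1` at time `T`. -/
def FirstHit {T : ℕ} (m : ℕ) (d : Fin T → Bool) : Prop :=
  (m : ℤ) + 2 * ups d T - T = -1 ∧ ∀ k : ℕ, k < T → (m : ℤ) + 2 * ups d k - k ≠ -1

lemma sum_filter_succ {T : ℕ} (f : Fin T → ℤ) (k : ℕ) (hk : k < T) :
    ∑ t ∈ Finset.univ.filter (fun t : Fin T => (t : ℕ) < k + 1), f t =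
      ∑ t ∈ Finset.univ.filter (fun t : Fin T => (t : ℕ) < k), f t + f ⟨k, hk⟩ := by
  have h : Finset.univ.filter (fun t : Fin T => (t : ℕ) < k + 1) =
      insert ⟨k, hk⟩ (Finset.univ.filter (fun t : Fin T => (t : ℕ) < k)) := by
    ext t
    simp only [Finset.mem_filter, Finset.mem_univ, true_and, Finset.mem_insert, Fin.ext_iff]
    omega
  rw [h, Finset.sum_insert (by simp), add_comm]

lemma filter_lt_length (T : ℕ) :
    Finset.univ.filter (fun t : Fin T => (t : ℕ) < T) = Finset.univ := by
  ext t
  simp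

lemma ups_zero {T : ℕ} (d : Fin T → Bool) : ups d 0 = 0 := by
  simp [ups]

lemma ups_step {T : ℕ} (d : Fin T → Bool) (k : ℕ) (hk : k < T) :
    ups d (k + 1) = ups d k ∨ ups d (k + 1) = ups d k + 1 := by
  unfold ups
  rw [sum_filter_succ _ k hk]
  cases d ⟨k, hk⟩ <;> simp

lemma sum_sign_eq {T : ℕ} (d : Fin T → Bool) (k : ℕ) (hk : k ≤ T) :
    ∑ t ∈ Finset.univ.filter (fun t : Fin T => (t : ℕ) < k), (if d t then (1 : ℤ) else -1) =
      2 * ups d k - k := by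
  induction k with
  | zero => simp [ups]
  | succ k ih =>
    have h := ih (by omega)
    unfold ups at h ⊢
    rw [sum_filter_succ _ k hk, sum_filter_succ _ k hk, h]
    cases d ⟨k, hk⟩
    · simp
      ring
    · simp
      ring

lemma ups_eq_card {T : ℕ} (d : Fin T → Bool) :
    ups d T = ((Finset.univ.filter (fun t => d t = true)).card : ℤ) := by
  unfold ups
  rw [filter_lt_length]
  simp

lemma ups_le {T : ℕ} (d : Fin T → Bool) (k : ℕ) : ups d k ≤ ups d T := by
  unfold ups
  refine Finset.sum_le_sum_of_subset_of_nonneg ?_ ?_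
  · rw [filter_lt_length]
    exact Finset.subset_univ _
  · intro t _ _
    split_ifs <;> simp

/-- Unit steps cannot jump over `-1`: a walk started at `m ≥ 0` that has not visited `-1` is still
non-negative. -/
lemma nonneg_of_ne {T : ℕ} (m : ℕ) (d : Fin T → Bool)
    (h : ∀ k : ℕ, k < T → (m : ℤ) + 2 * ups d k - k ≠ -1) (k : ℕ) (hk : k < T) :
    0 ≤ (m : ℤ) + 2 * ups d k - k := by
  induction k with
  | zero => simp [ups_zero]
  | succ k ih =>
    have h1 := ih (by omega)
    have h2 := h (k + 1) hk
    rcases ups_step d k (by omega) with h3 | h3 <;> rw [h3] at h2 ⊢ <;> push_cast at h2 ⊢ <;> omega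

/-- The event inside `P` for the horizon `n + i` is first passage with fewer than `i` up-steps. -/
lemma cond_iff {T : ℕ} (m i : ℕ) (n : ℤ) (d : Fin T → Bool) :
    (((m : ℤ) + ∑ t : Fin T, (if d t then (1 : ℤ) else -1)) = -1 ∧
        (∀ k : ℕ, k < T →
          ((m : ℤ) + ∑ t ∈ Finset.univ.filter (fun t : Fin T => (t : ℕ) < k),
              (if d t then (1 : ℤ) else -1)) ≠ -1 ∧
          (n + ∑ t ∈ Finset.univ.filter (fun t : Fin T => (t : ℕ) < k),
              (if d t then (1 : ℤ) else 0)) ≠ n + i)) ↔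
      FirstHit m d ∧ ups d T < i := by
  have e1 : ∑ t : Fin T, (if d t then (1 : ℤ) else -1) = 2 * ups d T - T := by
    rw [← sum_sign_eq d T le_rfl, filter_lt_length]
  rw [e1]
  constructor
  · rintro ⟨h0, h⟩
    have hne : ∀ k : ℕ, k < T → (m : ℤ) + 2 * ups d k - k ≠ -1 := by
      intro k hk
      have := (h k hk).1
      rw [sum_sign_eq d k hk.le] at this
      omega
    have hni : ∀ k : ℕ, k < T → ups d k ≠ i := by
      intro k hk h'
      exact (h k hk).2 (by rw [← h']; rfl)
    have hlt : ∀ k : ℕ, k < T → ups d k < i := by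
      intro k hk
      induction k with
      | zero =>
        have := hni 0 hk
        rw [ups_zero] at this ⊢
        omega
      | succ k ih =>
        have h1 := ih (by omega)
        have h2 := hni (k + 1) hk
        rcases ups_step d k (by omega) with h3 | h3 <;> omega
    refine ⟨⟨by omega, hne⟩, ?_⟩
    cases T with
    | zero =>
      rw [ups_zero] at h0
      simp at h0
    | succ T =>
      -- the walk is non-negative at time `T` and at `-1` at time `T + 1`, so the last step is down
      have h1 := nonneg_of_ne m d hne T (by omega)
      have h2 := hlt T (by omega)
      push_cast at h0
      rcases ups_step d T (by omega) with h3 | h3 <;> omega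
  · rintro ⟨⟨h0, h⟩, hi⟩
    refine ⟨by omega, fun k hk => ⟨?_, ?_⟩⟩
    · rw [sum_sign_eq d k hk.le]
      have := h k hk
      omega
    · have := ups_le d k
      change n + ups d k ≠ n + i
      omega

lemma prod_eq {T : ℕ} (I : ℝ) (d : Fin T → Bool) (i j : ℕ) (hT : T = i + j)
    (hi : ups d T = i) :
    ∏ t : Fin T, (if d t then (1 - I) else I) = (1 - I) ^ i * I ^ j := by
  rw [ups_eq_card] at hi
  have hi' : (Finset.univ.filter (fun t => d t = true)).card = i := by exact_mod_cast hi
  have hs := Finset.card_filter_add_card_filter_not (s := (Finset.univ : Finset (Fin T)))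
    (fun t => d t = true)
  rw [Finset.card_univ, Fintype.card_fin] at hs
  rw [Finset.prod_ite, Finset.prod_const, Finset.prod_const, hi']
  congr 2
  omega

open Classical in
lemma a_eq_card (i m : ℕ) :
    a i m = (Finset.univ.filter (fun d : Fin (m + 2 * i + 1) → Bool =>
      FirstHit m d ∧ ups d (m + 2 * i + 1) = i)).card := by
  unfold a
  rw [Nat.card_eq_fintype_card, Fintype.card_subtype]
  congr 1
  ext d
  simp only [Finset.mem_filter, Finset.mem_univ, true_and]
  have hc := ups_eq_card d
  constructor
  · rintro ⟨h1, h2⟩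
    refine ⟨⟨?_, ?_⟩, by omega⟩
    · push_cast
      omega
    · intro k hk
      have := h2 k (by omega)
      rw [sum_sign_eq d k hk.le] at this
      omega
  · rintro ⟨⟨h1, h2⟩, h3⟩
    refine ⟨by omega, fun k hk => ?_⟩
    rw [sum_sign_eq d k (by omega)]
    have := nonneg_of_ne m d h2 k (by omega)
    omega

open Classical in
/-- The probability that the walk first reaches `-1` at time `T`, having made fewer than `i`
up-steps: the `T`-th term of the series for `P` with horizon `n + i`. -/
noncomputable def hitTerm (I : ℝ) (m i T : ℕ) : ℝ :=
  ∑ d : Fin T → Bool, if FirstHit m d ∧ ups d T < i then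
    ∏ t : Fin T, (if d t then (1 - I) else I) else 0

lemma P_eq_tsum (I : ℝ) (m i : ℕ) (n : ℤ) :
    P I (n + i) m n = ∑' T : ℕ, hitTerm I m i T := by
  classical
  unfold P hitTerm
  refine tsum_congr fun T => Finset.sum_congr rfl fun d _ => ?_
  simp only [cond_iff]

lemma hitTerm_eq_zero (I : ℝ) (m i T : ℕ) (hT : m + 2 * i + 1 ≤ T) : hitTerm I m i T = 0 := by
  refine Finset.sum_eq_zero fun d _ => if_neg ?_
  rintro ⟨⟨h, -⟩, h'⟩
  omega

lemma summable_hitTerm (I : ℝ) (m i : ℕ) : Summable (hitTerm I m i) := by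
  refine summable_of_ne_finset_zero (s := Finset.range (m + 2 * i + 1)) fun T hT => ?_
  exact hitTerm_eq_zero I m i T (by simpa using hT)

/-- Only the term at time `m + 2 * i + 1` changes when `i` up-steps become admissible. -/
lemma hitTerm_succ (I : ℝ) (m i T : ℕ) :
    hitTerm I m (i + 1) T = hitTerm I m i T +
      if T = m + 2 * i + 1 then (a i m : ℝ) * (1 - I) ^ i * I ^ (m + 1 + i) else 0 := by
  classical
  have hsplit : hitTerm I m (i + 1) T = hitTerm I m i T +
      ∑ d : Fin T → Bool, if FirstHit m d ∧ ups d T = i then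
        ∏ t : Fin T, (if d t then (1 - I) else I) else 0 := by
    unfold hitTerm
    rw [← Finset.sum_add_distrib]
    refine Finset.sum_congr rfl fun d _ => ?_
    push_cast
    by_cases hF : FirstHit m d
    · rcases lt_trichotomy (ups d T) (i : ℤ) with h | h | h
      · simp [hF, h, h.ne, h.trans (lt_add_one _)]
      · simp [hF, h]
      · simp [hF, h.not_gt, h.ne', not_lt.mpr (Int.add_one_le_iff.mpr h)]
    · simp [hF]
  rw [hsplit]
  congr 1
  split_ifs with hT
  · subst hT
    rw [a_eq_card, ← Finset.sum_filter, mul_assoc, ← nsmul_eq_mul]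
    refine Finset.sum_eq_card_nsmul fun d hd => ?_
    exact prod_eq I d i (m + 1 + i) (by omega) (Finset.mem_filter.mp hd).2.2
  · refine Finset.sum_eq_zero fun d _ => if_neg ?_
    rintro ⟨⟨h, -⟩, h'⟩
    omega

-- STATEMENT 10: for every integer `m ≥ 0`, every integer `n` with `0 < n < L`, and every
-- real `I` with `0 ≤ I < 1`, the one-step increment in the horizon satisfies
-- `P_{L+1}(m, n) = P_L(m, n) + a_{L-n, m} * (1-I)^(L-n) * I^(m+1+L-n)`.
theorem stmt10 (L : ℤ) (hL : 0 < L) (m : ℕ) (n : ℤ) (hn : 0 < n) (hnL : n < L)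
    (I : ℝ) (hI0 : 0 ≤ I) (hI1 : I < 1) :
    P I (L + 1) (m : ℤ) n =
      P I L (m : ℤ) n
        + (a (L - n).toNat m : ℝ) * (1 - I) ^ (L - n).toNat * I ^ (m + 1 + (L - n).toNat) := by
  obtain ⟨i, rfl⟩ : ∃ i : ℕ, L = n + i := ⟨(L - n).toNat, by omega⟩
  have hi : (n + (i : ℤ) - n).toNat = i := by omega
  have hL1 : n + (i : ℤ) + 1 = n + ((i + 1 : ℕ) : ℤ) := by push_cast; ring
  rw [hi, hL1, P_eq_tsum, P_eq_tsum]
  simp only [hitTerm_succ]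
  rw [(summable_hitTerm I m i).tsum_add, tsum_ite_eq]
  exact summable_of_ne_finset_zero (s := {m + 2 * i + 1}) fun T hT =>
    if_neg (by simpa using hT)
end

section
/- (Theorem 2, monotonicity) For every integer m ≥ 0 and every integer n with 0 < n < L: if 0 < I < 1 then P_{L+1}(m,n) > P_L(m,n), i.e., the success probability of the double-spending attack strictly increases with the final length L; and if I = 0 or I = 1 then P_{L+1}(m,n) = P_L(m,n). -/
/-- The first-coordinate displacement after the first `k` steps of `d`. -/
def hor {T : ℕ} (d : Fin T → Bool) (k : ℕ) : ℤ :=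
  ∑ t ∈ Finset.univ.filter (fun t : Fin T => (t : ℕ) < k), (if d t then (1 : ℤ) else -1)

/-- The walk from `(m, n)` with steps `d` is on `L₁` at its final time and on neither `L₁` nor
`L₂` earlier. -/
def Hits (L m n : ℤ) {T : ℕ} (d : Fin T → Bool) : Prop :=
  m + hor d T = -1 ∧ ∀ k : ℕ, k < T → m + hor d k ≠ -1 ∧ n + ups d k ≠ L

/-- The probability of the step sequence `d`. -/
noncomputable def weight (I : ℝ) {T : ℕ} (d : Fin T → Bool) : ℝ :=
  ∏ t : Fin T, (if d t then (1 - I) else I)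

open Classical in
/-- The contribution of the step sequence `d` to `P I L m n`. -/
noncomputable def term (I : ℝ) (L m n : ℤ) {T : ℕ} (d : Fin T → Bool) : ℝ :=
  if Hits L m n d then weight I d else 0

lemma P_eq (I : ℝ) (L m n : ℤ) :
    P I L m n = ∑' T : ℕ, ∑ d : Fin T → Bool, term I L m n d := by
  unfold P term Hits hor ups weight
  simp

lemma sum_filter_lt_succ {T : ℕ} (f : Fin T → ℤ) {k : ℕ} (hk : k < T) :
    ∑ t ∈ Finset.univ.filter (fun t : Fin T => (t : ℕ) < k + 1), f t =
      ∑ t ∈ Finset.univ.filter (fun t : Fin T => (t : ℕ) < k), f t + f ⟨k, hk⟩ := by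
  have h : Finset.univ.filter (fun t : Fin T => (t : ℕ) < k + 1) =
      insert ⟨k, hk⟩ (Finset.univ.filter (fun t : Fin T => (t : ℕ) < k)) := by
    ext t
    simp only [Finset.mem_filter, Finset.mem_univ, true_and, Finset.mem_insert, Fin.ext_iff]
    omega
  rw [h, Finset.sum_insert (by simp), add_comm]

lemma ups_succ {T : ℕ} (d : Fin T → Bool) {k : ℕ} (hk : k < T) :
    ups d (k + 1) = ups d k + if d ⟨k, hk⟩ then 1 else 0 :=
  sum_filter_lt_succ _ hk

lemma hor_eq {T : ℕ} (d : Fin T → Bool) {k : ℕ} (hk : k ≤ T) : hor d k = 2 * ups d k - k := by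
  induction k with
  | zero => simp [hor, ups]
  | succ k ih =>
    have h : hor d (k + 1) = hor d k + if d ⟨k, hk⟩ then 1 else -1 := sum_filter_lt_succ _ hk
    rw [h, ups_succ d hk, ih (by omega)]
    push_cast
    split_ifs <;> ring

/-- The height grows by at most one per step, so it cannot jump over `L`. -/
lemma Hits.lt {L m n : ℤ} {T : ℕ} {d : Fin T → Bool} (h : Hits L m n d) (hnL : n < L) {k : ℕ}
    (hk : k < T) : n + ups d k < L := by
  induction k with
  | zero => simpa [ups_zero] using hnL
  | succ k ih =>
    have h1 := ih (by omega)
    have h2 := (h.2 _ hk).2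
    rw [ups_succ d (by omega)] at h2 ⊢
    split_ifs at h2 ⊢ <;> omega

lemma Hits.succ {L m n : ℤ} {T : ℕ} {d : Fin T → Bool} (h : Hits L m n d) (hnL : n < L) :
    Hits (L + 1) m n d :=
  ⟨h.1, fun k hk => ⟨(h.2 k hk).1, by have := h.lt hnL hk; omega⟩⟩

lemma Hits.length_le {L m n : ℤ} {T : ℕ} {d : Fin T → Bool} (h : Hits L m n d) (hm : 0 ≤ m)
    (hnL : n < L) : (T : ℤ) ≤ m + 1 + 2 * (L - n) := by
  have h1 := h.1
  rw [hor_eq d le_rfl] at h1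
  obtain _ | T := T
  · push_cast; omega
  · have h2 := h.lt hnL (Nat.lt_succ_self T)
    rw [ups_succ d (Nat.lt_succ_self T)] at h1
    push_cast at h1 ⊢
    split_ifs at h1 <;> omega

lemma summable_term (I : ℝ) {L m n : ℤ} (hm : 0 ≤ m) (hnL : n < L) :
    Summable fun T : ℕ => ∑ d : Fin T → Bool, term I L m n d := by
  refine summable_of_ne_finset_zero
    (s := Finset.range ((m + 1 + 2 * (L - n)).toNat + 1)) fun T hT => ?_
  refine Finset.sum_eq_zero fun d _ => if_neg fun h => hT ?_
  have := h.length_le hm hnL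
  rw [Finset.mem_range]
  omega

lemma weight_nonneg {I : ℝ} (hI0 : 0 ≤ I) (hI1 : I ≤ 1) {T : ℕ} (d : Fin T → Bool) :
    0 ≤ weight I d :=
  Finset.prod_nonneg fun t _ => by split_ifs <;> linarith

lemma weight_pos {I : ℝ} (hI0 : 0 < I) (hI1 : I < 1) {T : ℕ} (d : Fin T → Bool) :
    0 < weight I d :=
  Finset.prod_pos fun t _ => by split_ifs <;> linarith

lemma term_le_succ {I : ℝ} (hI0 : 0 ≤ I) (hI1 : I ≤ 1) {L m n : ℤ} (hnL : n < L) {T : ℕ}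
    (d : Fin T → Bool) : term I L m n d ≤ term I (L + 1) m n d := by
  unfold term
  by_cases h : Hits L m n d
  · rw [if_pos h, if_pos (h.succ hnL)]
  · rw [if_neg h]
    split_ifs
    · exact weight_nonneg hI0 hI1 d
    · exact le_rfl

lemma ups_peak {T a k : ℕ} (hk : k ≤ T) :
    ups (fun t : Fin T => decide ((t : ℕ) < a)) k = min k a := by
  induction k with
  | zero => simp [ups_zero]
  | succ k ih =>
    rw [ups_succ _ hk, ih (by omega)]
    simp only [decide_eq_true_eq]
    split_ifs <;> omega

/-- Rising exactly to height `n + a` and then going left until `L₁` is met: this sequence is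
counted for the final length `n + a + 1`, but for `n + a` it meets `L₂` at time `a`. -/
lemma hits_peak (m a : ℕ) (n : ℤ) :
    Hits (n + a + 1) m n (fun t : Fin (m + 2 * a + 1) => decide ((t : ℕ) < a)) ∧
      ¬ Hits (n + a) m n (fun t : Fin (m + 2 * a + 1) => decide ((t : ℕ) < a)) := by
  refine ⟨⟨?_, fun k hk => ?_⟩, fun h => ?_⟩
  · rw [hor_eq _ le_rfl, ups_peak le_rfl]
    omega
  · rw [hor_eq _ hk.le, ups_peak hk.le]
    omega
  · refine (h.2 a (by omega)).2 ?_
    rw [ups_peak (by omega), min_self]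

lemma term_zero_eq {L m n : ℤ} (hm : 0 ≤ m) {T : ℕ} (d : Fin T → Bool) :
    term 0 L m n d = 0 := by
  unfold term
  split_ifs with h
  · by_contra h0
    have hd : ∀ t, d t = true := fun t => by
      by_contra ht
      exact h0 (Finset.prod_eq_zero (Finset.mem_univ t) (by simp [ht]))
    have h1 := h.1
    have : hor d T = T := by simp [hor, hd]
    omega
  · rfl

lemma term_one_succ {L m n : ℤ} (hnL : n < L) {T : ℕ} (d : Fin T → Bool) :
    term 1 (L + 1) m n d = term 1 L m n d := by
  unfold term
  by_cases hd : ∀ t, d t = false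
  · have hu : ∀ k, ups d k = 0 := fun k => by simp [ups, hd]
    have : Hits (L + 1) m n d ↔ Hits L m n d := by
      have h1 : n ≠ L + 1 := by omega
      simp [Hits, hu, h1, hnL.ne]
    rw [propext this]
  · obtain ⟨t, ht⟩ := not_forall.1 hd
    have : weight 1 d = 0 := Finset.prod_eq_zero (Finset.mem_univ t) (by simp [ht])
    simp [this]

-- STATEMENT 11 (Theorem 2, monotonicity): for every integer `m ≥ 0` and every integer `n`
-- with `0 < n < L`: if `0 < I < 1` then `P_{L+1}(m, n) > P_L(m, n)` (the success probability
-- of the double-spending attack strictly increases with the final length `L`); and if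
-- `I = 0` or `I = 1` then `P_{L+1}(m, n) = P_L(m, n)`.
theorem stmt11 (I : ℝ) (hI0 : 0 ≤ I) (hI1 : I ≤ 1) (L : ℤ) (hL : 0 < L)
    (m : ℤ) (hm : 0 ≤ m) (n : ℤ) (hn : 0 < n) (hnL : n < L) :
    (0 < I → I < 1 → P I (L + 1) m n > P I L m n) ∧
      (I = 0 ∨ I = 1 → P I (L + 1) m n = P I L m n) := by
  simp only [P_eq]
  refine ⟨fun h0 h1 => ?_, ?_⟩
  · obtain ⟨m, rfl⟩ := Int.eq_ofNat_of_zero_le hm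
    obtain ⟨a, ha⟩ := Int.eq_ofNat_of_zero_le (sub_nonneg.2 hnL.le)
    obtain rfl : L = n + a := by omega
    obtain ⟨hp, hq⟩ := hits_peak m a n
    refine Summable.tsum_lt_tsum (i := m + 2 * a + 1)
      (fun T => Finset.sum_le_sum fun d _ => term_le_succ hI0 hI1 hnL d)
      (Finset.sum_lt_sum (fun d _ => term_le_succ hI0 hI1 hnL d)
        ⟨fun t => decide ((t : ℕ) < a), Finset.mem_univ _, ?_⟩)
      (summable_term I hm hnL) (summable_term I hm (by omega))
    rw [term, term, if_neg hq, if_pos hp]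
    exact weight_pos h0 h1 _
  · rintro (rfl | rfl)
    · simp only [term_zero_eq hm]
    · simp only [term_one_succ hnL]
end
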